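/- Fix an integer k ≥ 0. Let Ẑ be an F_k-measurable 𝔹-valued random variable and let δ₂ ∈ (0,1) and r₂ ≥ 0 be such that P(‖μ − Ẑ‖ ≥ r₂) ≤ δ₂. For λ > 0 and n > k define μ̂_n(k) := (1/(n−k))·Σ_{m=k+1}^n ( Trunc(λ(X_m − Ẑ))·(X_m − Ẑ) + Ẑ ). Then for every δ₁ ∈ (0,1) with δ₁ + δ₂ ≤ 1, with probability at least 1 − δ₁ − δ₂, simultaneously for all n > k: ‖μ̂_n(k) − μ‖ ≤ λ^{p−1}·(β·𝔠_p + K_p·2^{p−1})·(v + r₂^p) + β·log(2/δ₁)/(λ·(n−k)). -/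

import Mathlib

open MeasureTheory
open scoped Classical

/-- `truncB x = min(1, ‖x‖)/‖x‖` for `x ≠ 0`, and `truncB 0 = 1`; so `truncB x • x` is the
projection of `x` onto the closed unit ball. -/
noncomputable def truncB {B : Type*} [NormedAddCommGroup B] (x : B) : ℝ :=
  if x = 0 then 1 else min 1 ‖x‖ / ‖x‖

/-- `K_p = (1/p) ((p-1)/p)^{p-1}`. -/
noncomputable def Kp (p : ℝ) : ℝ := (1 / p) * ((p - 1) / p) ^ (p - 1)

/-- `𝔠_p(ρ) = 2^{p+1} (e^{2ρ} - 2ρ - 1)/(2ρ)²`. -/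
noncomputable def frakC (p ρ : ℝ) : ℝ :=
  2 ^ (p + 1) * (Real.exp (2 * ρ) - 2 * ρ - 1) / (2 * ρ) ^ 2

/-
The norm is controlled through `cosh ‖·‖`. If `ℓ` is a subgradient of `cosh ‖·‖` at `s`, then
smoothness gives Pinelis' inequality
`cosh ‖s + d‖ ≤ cosh ‖s‖ + ℓ d + β ^ 2 * (exp ‖d‖ - 1 - ‖d‖) * cosh ‖s‖`.
For partial sums `S n` of bounded martingale differences, `ℓ d` averages out, so that
`exp (-c * n) * cosh ‖S n‖` is a nonnegative supermartingale and Ville's maximal inequality bounds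
`‖S n‖` for all `n` at once. The error of the clipped mean splits into centred clipped increments,
to which this applies since their conditional second moments are bounded by the `p`-th moment, and
a conditional bias of order `lam ^ (p - 1)`. The centring `Z` may be replaced by `μ` on the event
`r₂ ≤ ‖μ - Z‖`, whose probability is then paid for separately.
-/

lemma map_add_map_le_of_convexOn_of_monotoneOn {f : ℝ → ℝ} {s : Set ℝ} (hf : ConvexOn ℝ s f)
    (hmono : MonotoneOn f s) {u w U W : ℝ} (hu : u ∈ s) (hw : w ∈ s) (hU : U ∈ s) (hW : W ∈ s)
    (huU : u ≤ U) (hwU : w ≤ U) (hsum : u + w ≤ U + W) : f u + f w ≤ f U + f W := by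
  rcases le_or_gt w W with hwW | hWw
  · exact add_le_add (hmono hu hU huU) (hmono hw hW hwW)
  have hUW : 0 < U - W := by linarith
  set t := (w - W) / (U - W)
  have ht0 : 0 ≤ t := div_nonneg (by linarith) hUW.le
  have ht1 : 0 ≤ 1 - t := sub_nonneg.2 ((div_le_one hUW).2 (by linarith))
  have htw : t * (U - W) = w - W := div_mul_cancel₀ _ hUW.ne'
  have hw_comb : t • U + (1 - t) • W = w := by
    simp only [smul_eq_mul]; linear_combination htw
  have hu_comb : u ≤ (1 - t) • U + t • W := by simp only [smul_eq_mul]; linarith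
  have hfu := (hmono hu (hf.1 hU hW ht1 ht0 (by ring)) hu_comb).trans
    (hf.2 hU hW ht1 ht0 (by ring))
  have hfw := hw_comb ▸ hf.2 hU hW ht0 ht1 (by ring)
  simp only [smul_eq_mul] at hfu hfw
  linarith

lemma cosh_le_cosh_of_le {x y : ℝ} (hx : 0 ≤ x) (hxy : x ≤ y) : Real.cosh x ≤ Real.cosh y :=
  Real.cosh_strictMonoOn.monotoneOn hx (hx.trans hxy) hxy

lemma hasSum_cosh_sqrt {u : ℝ} (hu : 0 ≤ u) :
    HasSum (fun n : ℕ => u ^ n / (2 * n).factorial) (Real.cosh √u) := by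
  simpa only [pow_mul, Real.sq_sqrt hu] using Real.hasSum_cosh √u

lemma convexOn_cosh_sqrt : ConvexOn ℝ (Set.Ici 0) fun u : ℝ => Real.cosh √u := by
  refine ⟨convex_Ici 0, fun x hx y hy a b ha hb hab => ?_⟩
  have hxy := convex_Ici (0 : ℝ) hx hy ha hb hab
  refine hasSum_le (fun n => ?_) (hasSum_cosh_sqrt hxy)
    (((hasSum_cosh_sqrt hx).mul_left a).add ((hasSum_cosh_sqrt hy).mul_left b))
  have hpow := (convexOn_pow n).2 hx hy ha hb hab
  simp only [smul_eq_mul] at hpow ⊢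
  calc (a * x + b * y) ^ n / (2 * n).factorial
      ≤ (a * x ^ n + b * y ^ n) / (2 * n).factorial := by gcongr
    _ = _ := by ring

lemma monotone_cosh_sqrt : Monotone fun u : ℝ => Real.cosh √u := fun _ _ huw =>
  cosh_le_cosh_of_le (Real.sqrt_nonneg _) (Real.sqrt_le_sqrt huw)

lemma sinh_le_mul_cosh {x : ℝ} (hx : 0 ≤ x) : Real.sinh x ≤ x * Real.cosh x := by
  have hmono : MonotoneOn (fun t => t * Real.cosh t - Real.sinh t) (Set.Ici 0) := by
    refine monotoneOn_of_deriv_nonneg (convex_Ici 0) (by fun_prop) (by fun_prop) fun t ht => ?_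
    rw [interior_Ici, Set.mem_Ioi] at ht
    have hderiv := ((hasDerivAt_id t).mul (Real.hasDerivAt_cosh t)).sub (Real.hasDerivAt_sinh t)
    have heq : deriv (fun t => t * Real.cosh t - Real.sinh t) t = t * Real.sinh t := by
      refine hderiv.deriv.trans ?_
      simp only [id_eq]; ring
    rw [heq]
    exact mul_nonneg ht.le (Real.sinh_nonneg_iff.2 ht.le)
  simpa using hmono Set.self_mem_Ici hx hx

lemma cosh_sub_cosh (x y : ℝ) :
    Real.cosh x - Real.cosh y = 2 * Real.sinh ((x + y) / 2) * Real.sinh ((x - y) / 2) := by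
  have hadd (u w : ℝ) : Real.cosh (u + w) - Real.cosh (u - w) = 2 * Real.sinh u * Real.sinh w := by
    rw [Real.cosh_add, Real.cosh_sub]; ring
  convert hadd ((x + y) / 2) ((x - y) / 2) using 3 <;> ring

lemma cosh_sub_cosh_le {x y : ℝ} (hy : 0 ≤ y) (hyx : y ≤ x) :
    Real.cosh x - Real.cosh y ≤ (x ^ 2 - y ^ 2) / 2 * Real.cosh x := by
  have hsum : 0 ≤ (x + y) / 2 := by linarith
  have hdiff : 0 ≤ (x - y) / 2 := by linarith
  calc Real.cosh x - Real.cosh y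
      = 2 * Real.sinh ((x + y) / 2) * Real.sinh ((x - y) / 2) := cosh_sub_cosh x y
    _ ≤ 2 * ((x + y) / 2 * Real.cosh ((x + y) / 2)) * ((x - y) / 2 * Real.cosh ((x - y) / 2)) := by
        have := Real.sinh_nonneg_iff.2 hdiff
        gcongr <;> exact sinh_le_mul_cosh ‹_›
    _ = (x ^ 2 - y ^ 2) / 2 * (Real.cosh ((x + y) / 2) * Real.cosh ((x - y) / 2)) := by ring
    _ ≤ (x ^ 2 - y ^ 2) / 2 * Real.cosh x := by
        have hx : Real.cosh x = Real.cosh ((x + y) / 2) * Real.cosh ((x - y) / 2) +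
            Real.sinh ((x + y) / 2) * Real.sinh ((x - y) / 2) := by
          rw [← Real.cosh_add]; ring_nf
        have hsinh := mul_nonneg (Real.sinh_nonneg_iff.2 hsum) (Real.sinh_nonneg_iff.2 hdiff)
        gcongr
        · nlinarith
        · linarith

lemma cosh_add_le_exp_mul_cosh (x : ℝ) {b : ℝ} (hb : 0 ≤ b) :
    Real.cosh (x + b) ≤ Real.exp b * Real.cosh x := by
  have hpos : Real.exp (x + b) = Real.exp b * Real.exp x := by rw [← Real.exp_add, add_comm]
  have hneg : Real.exp (-(x + b)) ≤ Real.exp b * Real.exp (-x) := by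
    rw [← Real.exp_add]; exact Real.exp_le_exp.2 (by linarith)
  rw [Real.cosh_eq, Real.cosh_eq]
  linarith

lemma two_mul_cosh_sub_one_mul_exp (b : ℝ) :
    2 * (Real.cosh b - 1) * Real.exp b = (Real.exp b - 1) ^ 2 := by
  have hinv : Real.exp (-b) * Real.exp b = 1 := by rw [← Real.exp_add]; simp
  rw [Real.cosh_eq]
  linear_combination hinv

lemma cosh_add_cosh_le_cosh_add_add_cosh_sub {A C r b β : ℝ} (hA : 0 ≤ A) (hC : 0 ≤ C)
    (hr : 0 ≤ r) (hb : 0 ≤ b) (hβ : 1 ≤ β) (hAle : A ≤ r + b) (hCle : C ≤ r + b)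
    (hrC : |r - b| ≤ C) (hsq : A ^ 2 + C ^ 2 ≤ 2 * r ^ 2 + 2 * β ^ 2 * b ^ 2) :
    Real.cosh A + Real.cosh C ≤
      Real.cosh (r + b) + Real.cosh (r - b) + (β ^ 2 - 1) * b ^ 2 * Real.cosh C := by
  set W := max ((r - b) ^ 2) (A ^ 2 + C ^ 2 - (r + b) ^ 2)
  have hβ' : 0 ≤ β ^ 2 - 1 := by nlinarith
  have hsqrC : (r - b) ^ 2 ≤ C ^ 2 := by rw [← sq_abs]; gcongr
  have hAsq : A ^ 2 ≤ (r + b) ^ 2 := by gcongr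
  have hW0 : 0 ≤ W := (sq_nonneg _).trans (le_max_left _ _)
  have hWC : √W ≤ C := Real.sqrt_le_iff.2 ⟨hC, max_le hsqrC (by linarith)⟩
  have hWsub : W - (r - b) ^ 2 ≤ 2 * (β ^ 2 - 1) * b ^ 2 := by
    rw [sub_le_iff_le_add]; exact max_le (by nlinarith [sq_nonneg b]) (by linarith)
  have hmajor : Real.cosh A + Real.cosh C ≤ Real.cosh (r + b) + Real.cosh √W := by
    have := map_add_map_le_of_convexOn_of_monotoneOn convexOn_cosh_sqrt
      (monotone_cosh_sqrt.monotoneOn _) (sq_nonneg A) (sq_nonneg C) (sq_nonneg (r + b)) hW0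
      hAsq (by gcongr) (by linarith [le_max_right ((r - b) ^ 2) (A ^ 2 + C ^ 2 - (r + b) ^ 2)])
    simpa only [Real.sqrt_sq hA, Real.sqrt_sq hC, Real.sqrt_sq (add_nonneg hr hb)] using this
  have hcoshC : Real.cosh √W ≤ Real.cosh C := cosh_le_cosh_of_le (Real.sqrt_nonneg W) hWC
  have hincr : Real.cosh √W - Real.cosh (r - b) ≤ (β ^ 2 - 1) * b ^ 2 * Real.cosh C := by
    rw [← Real.cosh_abs (r - b)]
    refine (cosh_sub_cosh_le (abs_nonneg _) (Real.abs_le_sqrt (le_max_left _ _))).trans ?_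
    rw [Real.sq_sqrt hW0, sq_abs]
    have := (Real.cosh_pos √W).le
    gcongr
    linarith
  linarith

lemma cosh_add_cosh_sub_two_mul_cosh_le {A C r b β : ℝ} (hA : 0 ≤ A) (hC : 0 ≤ C) (hr : 0 ≤ r)
    (hb : 0 ≤ b) (hβ : 1 ≤ β) (hAle : A ≤ r + b) (hCle : C ≤ r + b) (hrC : |r - b| ≤ C)
    (hrCb : r ≤ C + b) (hsq : A ^ 2 + C ^ 2 ≤ 2 * r ^ 2 + 2 * β ^ 2 * b ^ 2) :
    Real.cosh A + Real.cosh C - 2 * Real.cosh r ≤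
      β ^ 2 * (Real.exp b - 1) ^ 2 * Real.cosh C := by
  have hβ' : 0 ≤ β ^ 2 - 1 := by nlinarith
  have hcoshr : Real.cosh r ≤ Real.exp b * Real.cosh C :=
    (cosh_le_cosh_of_le hr hrCb).trans (cosh_add_le_exp_mul_cosh C hb)
  have hparallel : Real.cosh (r + b) + Real.cosh (r - b) - 2 * Real.cosh r =
      2 * (Real.cosh b - 1) * Real.cosh r := by
    rw [Real.cosh_add, Real.cosh_sub]; ring
  have hmain : 2 * (Real.cosh b - 1) * Real.cosh r ≤ (Real.exp b - 1) ^ 2 * Real.cosh C := by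
    have := sub_nonneg.2 (Real.one_le_cosh b)
    calc 2 * (Real.cosh b - 1) * Real.cosh r
        ≤ 2 * (Real.cosh b - 1) * (Real.exp b * Real.cosh C) := by gcongr
      _ = (Real.exp b - 1) ^ 2 * Real.cosh C := by
        rw [← two_mul_cosh_sub_one_mul_exp]; ring
  have hbexp : (β ^ 2 - 1) * b ^ 2 * Real.cosh C ≤
      (β ^ 2 - 1) * (Real.exp b - 1) ^ 2 * Real.cosh C := by
    have := (Real.cosh_pos C).le
    gcongr
    linarith [Real.add_one_le_exp b]
  linarith [cosh_add_cosh_le_cosh_add_add_cosh_sub hA hC hr hb hβ hAle hCle hrC hsq]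

lemma exp_sub_one_sub_eq_two_mul_half_add_sq (a : ℝ) :
    Real.exp a - 1 - a =
      2 * (Real.exp (a / 2) - 1 - a / 2) + (Real.exp (a / 2) - 1) ^ 2 := by
  have hexp : Real.exp a = Real.exp (a / 2) ^ 2 := by
    rw [← Real.exp_nat_mul]; congr 1; push_cast; ring
  rw [hexp]; ring

lemma cosh_add_sinh_mul_sub_le_cosh (x y : ℝ) :
    Real.cosh x + Real.sinh x * (y - x) ≤ Real.cosh y := by
  have htangent (t u : ℝ) : Real.exp t * (1 + (u - t)) ≤ Real.exp u := by
    calc Real.exp t * (1 + (u - t)) ≤ Real.exp t * Real.exp (u - t) := by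
          gcongr; linarith [Real.add_one_le_exp (u - t)]
      _ = Real.exp u := by rw [← Real.exp_add]; ring_nf
  rw [Real.cosh_eq, Real.sinh_eq, Real.cosh_eq]
  linarith [htangent x y, htangent (-x) (-y)]

lemma exp_sub_one_le_mul_exp (x : ℝ) : Real.exp x - 1 ≤ x * Real.exp x := by
  have hinv : Real.exp (-x) * Real.exp x = 1 := by
    rw [← Real.exp_add, neg_add_cancel, Real.exp_zero]
  nlinarith [Real.add_one_le_exp (-x), Real.exp_pos x]

section TwoSmooth

variable {B : Type*} [NormedAddCommGroup B] {β : ℝ}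

/-- `(2, β)`-smoothness of the norm of `B`, the hypothesis of Pinelis' martingale inequalities. -/
def IsTwoSmooth (B : Type*) [NormedAddCommGroup B] (β : ℝ) : Prop :=
  ∀ x y : B, ‖x + y‖ ^ 2 + ‖x - y‖ ^ 2 ≤ 2 * ‖x‖ ^ 2 + 2 * β ^ 2 * ‖y‖ ^ 2

lemma cosh_norm_add_le_exp_mul_cosh_norm (x y : B) :
    Real.cosh ‖x + y‖ ≤ Real.exp ‖y‖ * Real.cosh ‖x‖ :=
  (cosh_le_cosh_of_le (norm_nonneg _) (norm_add_le x y)).trans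
    (cosh_add_le_exp_mul_cosh ‖x‖ (norm_nonneg y))

lemma IsTwoSmooth.cosh_norm_add_add_cosh_norm_sub_le (hB : IsTwoSmooth B β) (hβ : 1 ≤ β)
    (x y : B) : Real.cosh ‖x + y‖ + Real.cosh ‖x - y‖ - 2 * Real.cosh ‖x‖ ≤
      β ^ 2 * (Real.exp ‖y‖ - 1) ^ 2 * Real.cosh ‖x - y‖ := by
  have hx : ‖x‖ ≤ ‖x - y‖ + ‖y‖ := by simpa using norm_add_le (x - y) y
  exact cosh_add_cosh_sub_two_mul_cosh_le (norm_nonneg _) (norm_nonneg _) (norm_nonneg _)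
    (norm_nonneg _) hβ (norm_add_le x y) (norm_sub_le x y) (abs_norm_sub_norm_le x y) hx (hB x y)

variable [NormedSpace ℝ B]

lemma nonpos_of_le_two_mul_half_of_le_sq {T : B → ℝ} {d : B} {K : ℝ}
    (hhalf : ∀ x, T x ≤ 2 * T ((2⁻¹ : ℝ) • x)) (hquad : ∀ x, ‖x‖ ≤ ‖d‖ → T x ≤ K * ‖x‖ ^ 2) :
    T d ≤ 0 := by
  have hiter (n : ℕ) : T d ≤ 2 ^ n * T ((2⁻¹ : ℝ) ^ n • d) := by
    induction n with
    | zero => simp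
    | succ n ih =>
      rw [pow_succ (2 : ℝ), mul_assoc, pow_succ', mul_smul]
      refine ih.trans ?_
      gcongr
      exact hhalf _
  have hbound (n : ℕ) : T d ≤ K * ‖d‖ ^ 2 * (2⁻¹ : ℝ) ^ n := by
    have hnorm : ‖(2⁻¹ : ℝ) ^ n • d‖ = (2⁻¹ : ℝ) ^ n * ‖d‖ := by rw [norm_smul]; norm_num
    have hle : ‖(2⁻¹ : ℝ) ^ n • d‖ ≤ ‖d‖ := by
      rw [hnorm]
      exact mul_le_of_le_one_left (norm_nonneg d) (pow_le_one₀ (by norm_num) (by norm_num))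
    calc T d ≤ 2 ^ n * (K * ‖(2⁻¹ : ℝ) ^ n • d‖ ^ 2) := by
          refine (hiter n).trans ?_
          gcongr
          exact hquad _ hle
      _ = K * ‖d‖ ^ 2 * (2⁻¹ : ℝ) ^ n := by rw [hnorm, inv_pow]; field_simp
  have hlim := (tendsto_pow_atTop_nhds_zero_of_lt_one (by norm_num : (0 : ℝ) ≤ 2⁻¹)
    (by norm_num)).const_mul (K * ‖d‖ ^ 2)
  simpa using ge_of_tendsto' hlim hbound

/-- `ℓ` is a subgradient at `s` of the convex function `x ↦ cosh ‖x‖`. -/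
def IsCoshNormSubgradient (ℓ : B →L[ℝ] ℝ) (s : B) : Prop :=
  ∀ d, Real.cosh ‖s‖ + ℓ d ≤ Real.cosh ‖s + d‖

lemma exists_isCoshNormSubgradient (s : B) : ∃ ℓ, IsCoshNormSubgradient ℓ s := by
  obtain ⟨g, hg, hgs⟩ := exists_dual_vector'' ℝ s
  refine ⟨Real.sinh ‖s‖ • g, fun d => ?_⟩
  have hgd : ‖s‖ + g d = g (s + d) := by rw [map_add, hgs, RCLike.ofReal_real_eq_id, id]
  have hle : |‖s‖ + g d| ≤ ‖s + d‖ := by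
    rw [hgd, ← Real.norm_eq_abs]
    exact (g.le_of_opNorm_le hg _).trans (one_mul _).le
  calc Real.cosh ‖s‖ + (Real.sinh ‖s‖ • g) d
      = Real.cosh ‖s‖ + Real.sinh ‖s‖ * (‖s‖ + g d - ‖s‖) := by
        rw [smul_apply, smul_eq_mul, add_sub_cancel_left]
    _ ≤ Real.cosh (‖s‖ + g d) := cosh_add_sinh_mul_sub_le_cosh _ _
    _ ≤ Real.cosh ‖s + d‖ := by rwa [Real.cosh_le_cosh, abs_norm]

namespace IsCoshNormSubgradient

variable {ℓ : B →L[ℝ] ℝ} {s : B}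

lemma cosh_norm_add_sub_le_sq (hℓ : IsCoshNormSubgradient ℓ s) (hB : IsTwoSmooth B β)
    (hβ : 1 ≤ β) (d : B) : Real.cosh ‖s + d‖ - Real.cosh ‖s‖ - ℓ d ≤
      β ^ 2 * ‖d‖ ^ 2 * Real.exp (3 * ‖d‖) * Real.cosh ‖s‖ := by
  have hneg : Real.cosh ‖s‖ - ℓ d ≤ Real.cosh ‖s - d‖ := by
    simpa only [map_neg, ← sub_eq_add_neg] using hℓ (-d)
  have hsub : Real.cosh ‖s - d‖ ≤ Real.exp ‖d‖ * Real.cosh ‖s‖ := by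
    simpa only [norm_neg, ← sub_eq_add_neg] using cosh_norm_add_le_exp_mul_cosh_norm s (-d)
  have hexp : 0 ≤ Real.exp ‖d‖ - 1 := sub_nonneg.2 (Real.one_le_exp (norm_nonneg d))
  calc Real.cosh ‖s + d‖ - Real.cosh ‖s‖ - ℓ d
      ≤ Real.cosh ‖s + d‖ + Real.cosh ‖s - d‖ - 2 * Real.cosh ‖s‖ := by linarith
    _ ≤ β ^ 2 * (Real.exp ‖d‖ - 1) ^ 2 * Real.cosh ‖s - d‖ :=
      hB.cosh_norm_add_add_cosh_norm_sub_le hβ s d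
    _ ≤ β ^ 2 * (‖d‖ * Real.exp ‖d‖) ^ 2 * (Real.exp ‖d‖ * Real.cosh ‖s‖) := by
      gcongr; exact exp_sub_one_le_mul_exp _
    _ = β ^ 2 * ‖d‖ ^ 2 * Real.exp (3 * ‖d‖) * Real.cosh ‖s‖ := by
      have hexp3 : Real.exp (3 * ‖d‖) = Real.exp ‖d‖ ^ 3 := by
        rw [← Real.exp_nat_mul, Nat.cast_ofNat]
      rw [hexp3]; ring

/- The defect of the inequality at most doubles relative to that at `d / 2`, by smoothness at the
midpoint, and it is quadratically small near `0`. -/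
lemma cosh_norm_add_le (hℓ : IsCoshNormSubgradient ℓ s) (hB : IsTwoSmooth B β) (hβ : 1 ≤ β)
    (d : B) : Real.cosh ‖s + d‖ ≤
      Real.cosh ‖s‖ + ℓ d + β ^ 2 * (Real.exp ‖d‖ - 1 - ‖d‖) * Real.cosh ‖s‖ := by
  set T : B → ℝ := fun x => Real.cosh ‖s + x‖ - Real.cosh ‖s‖ - ℓ x -
    β ^ 2 * (Real.exp ‖x‖ - 1 - ‖x‖) * Real.cosh ‖s‖ with hT
  have hhalf (x : B) : T x ≤ 2 * T ((2⁻¹ : ℝ) • x) := by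
    have hnorm : ‖(2⁻¹ : ℝ) • x‖ = ‖x‖ / 2 := by rw [norm_smul]; norm_num; ring
    have hadd : s + (2⁻¹ : ℝ) • x + (2⁻¹ : ℝ) • x = s + x := by module
    have hdiff := hB.cosh_norm_add_add_cosh_norm_sub_le hβ (s + (2⁻¹ : ℝ) • x) ((2⁻¹ : ℝ) • x)
    rw [hadd, add_sub_cancel_right, hnorm] at hdiff
    simp only [hT, map_smul, smul_eq_mul, hnorm]
    rw [exp_sub_one_sub_eq_two_mul_half_add_sq ‖x‖]
    linarith
  have hquad (x : B) (hx : ‖x‖ ≤ ‖d‖) :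
      T x ≤ β ^ 2 * Real.exp (3 * ‖d‖) * Real.cosh ‖s‖ * ‖x‖ ^ 2 := by
    have hψ : 0 ≤ Real.exp ‖x‖ - 1 - ‖x‖ := by linarith [Real.add_one_le_exp ‖x‖]
    calc T x ≤ Real.cosh ‖s + x‖ - Real.cosh ‖s‖ - ℓ x := sub_le_self _ (by positivity)
      _ ≤ β ^ 2 * ‖x‖ ^ 2 * Real.exp (3 * ‖x‖) * Real.cosh ‖s‖ :=
        hℓ.cosh_norm_add_sub_le_sq hB hβ x
      _ ≤ β ^ 2 * ‖x‖ ^ 2 * Real.exp (3 * ‖d‖) * Real.cosh ‖s‖ := by gcongr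
      _ = β ^ 2 * Real.exp (3 * ‖d‖) * Real.cosh ‖s‖ * ‖x‖ ^ 2 := by ring
  have hTd : T d ≤ 0 := nonpos_of_le_two_mul_half_of_le_sq hhalf hquad
  simp only [hT] at hTd
  linarith

lemma abs_apply_le (hℓ : IsCoshNormSubgradient ℓ s) (d : B) : |ℓ d| ≤ Real.cosh (‖s‖ + ‖d‖) := by
  have hle (x : B) : ℓ x ≤ Real.cosh (‖s‖ + ‖x‖) := by
    have hcosh : Real.cosh ‖s + x‖ ≤ Real.cosh (‖s‖ + ‖x‖) :=
      cosh_le_cosh_of_le (norm_nonneg _) (norm_add_le s x)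
    linarith [hℓ x, Real.cosh_pos ‖s‖]
  refine abs_le.2 ⟨?_, hle d⟩
  have := hle (-d)
  rw [map_neg, norm_neg] at this
  linarith

lemma sub_apply_le {ℓ' : B →L[ℝ] ℝ} {s' : B} (hℓ : IsCoshNormSubgradient ℓ s)
    (hℓ' : IsCoshNormSubgradient ℓ' s') (h : B) :
    (ℓ' - ℓ) h ≤ Real.cosh ‖s + (s' - s + h)‖ - Real.cosh ‖s‖ - ℓ (s' - s + h) := by
  have hs := hℓ (s' - s)
  have hs' := hℓ' h
  have hsum : s + (s' - s + h) = s' + h := by abel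
  rw [add_sub_cancel] at hs
  rw [hsum, map_add, sub_apply]
  linarith

lemma norm_sub_le {ℓ' : B →L[ℝ] ℝ} {s' : B} (hℓ : IsCoshNormSubgradient ℓ s)
    (hℓ' : IsCoshNormSubgradient ℓ' s') (hs : s' ≠ s) (hB : IsTwoSmooth B β) (hβ : 1 ≤ β) :
    ‖ℓ' - ℓ‖ ≤ 4 * β ^ 2 * Real.exp (6 * ‖s' - s‖) * Real.cosh ‖s‖ * ‖s' - s‖ := by
  have hpos : 0 < ‖s' - s‖ := norm_pos_iff.2 (sub_ne_zero.2 hs)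
  have hle (u : B) (hu : ‖u‖ = 1) : (ℓ' - ℓ) u ≤
      4 * β ^ 2 * Real.exp (6 * ‖s' - s‖) * Real.cosh ‖s‖ * ‖s' - s‖ := by
    have hnorm : ‖s' - s + ‖s' - s‖ • u‖ ≤ 2 * ‖s' - s‖ := by
      refine (norm_add_le _ _).trans_eq ?_
      rw [norm_smul, norm_norm, hu]; ring
    refine le_of_mul_le_mul_left ?_ hpos
    calc ‖s' - s‖ * (ℓ' - ℓ) u = (ℓ' - ℓ) (‖s' - s‖ • u) := by rw [map_smul, smul_eq_mul]
      _ ≤ _ := hℓ.sub_apply_le hℓ' _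
      _ ≤ _ := hℓ.cosh_norm_add_sub_le_sq hB hβ _
      _ ≤ β ^ 2 * (2 * ‖s' - s‖) ^ 2 * Real.exp (3 * (2 * ‖s' - s‖)) * Real.cosh ‖s‖ := by gcongr
      _ = _ := by ring_nf
  refine ContinuousLinearMap.opNorm_le_of_unit_norm (by positivity) fun u hu =>
    abs_le.2 ⟨?_, hle u hu⟩
  have := hle (-u) (by rwa [norm_neg])
  rw [map_neg] at this
  linarith

end IsCoshNormSubgradient

lemma IsTwoSmooth.continuous_of_isCoshNormSubgradient (hB : IsTwoSmooth B β) (hβ : 1 ≤ β)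
    {ℓ : B → B →L[ℝ] ℝ} (hℓ : ∀ s, IsCoshNormSubgradient (ℓ s) s) : Continuous ℓ := by
  refine continuous_iff_continuousAt.2 fun s => tendsto_iff_norm_sub_tendsto_zero.2 ?_
  have hbound : Continuous fun s' =>
      4 * β ^ 2 * Real.exp (6 * ‖s' - s‖) * Real.cosh ‖s‖ * ‖s' - s‖ := by fun_prop
  refine squeeze_zero (fun _ => norm_nonneg _) (fun s' => ?_) (by simpa using hbound.tendsto s)
  rcases eq_or_ne s' s with rfl | hs
  · simp
  · exact (hℓ s).norm_sub_le (hℓ s') hs hB hβ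

end TwoSmooth

section Martingale

variable {B : Type*} [NormedAddCommGroup B] {Ω : Type*} {m mΩ : MeasurableSpace Ω} {P : Measure Ω}

lemma integrable_comp_norm_of_bound [IsFiniteMeasure P]
    {φ : ℝ → ℝ} (hφ : Continuous φ) {f : Ω → B} {K : ℝ} (hf : AEStronglyMeasurable f P)
    (hfK : ∀ᵐ ω ∂P, ‖f ω‖ ≤ K) : Integrable (fun ω => φ ‖f ω‖) P := by
  obtain ⟨C, hC⟩ := (isCompact_Icc (a := 0) (b := K)).exists_bound_of_continuousOn hφ.continuousOn
  refine .of_bound (hφ.comp_aestronglyMeasurable hf.norm) C ?_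
  filter_upwards [hfK] with ω hω
  exact hC _ ⟨norm_nonneg _, hω⟩

lemma ae_norm_sum_range_le {D : ℕ → Ω → B} {L : ℝ} (hDL : ∀ i, ∀ᵐ ω ∂P, ‖D i ω‖ ≤ L) (n : ℕ) :
    ∀ᵐ ω ∂P, ‖∑ i ∈ Finset.range n, D i ω‖ ≤ n * L := by
  filter_upwards [ae_all_iff.2 hDL] with ω hω
  simpa using norm_sum_le_of_le (Finset.range n) fun i _ => hω i

lemma mul_measureReal_exists_le_supermartingale_le [IsFiniteMeasure P] {𝒢 : Filtration ℕ mΩ}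
    {f : ℕ → Ω → ℝ} (hf : Supermartingale f 𝒢 P) (hf0 : ∀ n ω, 0 ≤ f n ω) {a : ℝ}
    (ha : 0 ≤ a) (n : ℕ) :
    a * P.real {ω | ∃ k ≤ n, a ≤ f k ω} ≤ ∫ ω, f 0 ω ∂P := by
  set τ : Ω → ℕ∞ := fun ω => (hittingBtwn f (Set.Ici a) 0 n ω : ℕ)
  have hτ_stop : IsStoppingTime 𝒢 τ :=
    hf.stronglyAdapted.adapted.isStoppingTime_hittingBtwn measurableSet_Ici
  have hτ_le (ω : Ω) : τ ω ≤ n := Nat.cast_le.2 (hittingBtwn_le ω)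
  have hhit : {ω | ∃ k ≤ n, a ≤ f k ω} ⊆ {ω | a ≤ stoppedValue f τ ω} := fun ω ⟨k, hkn, hk⟩ =>
    stoppedValue_hittingBtwn_mem (s := Set.Ici a) ⟨k, ⟨Nat.zero_le k, hkn⟩, hk⟩
  have hint : Integrable (stoppedValue f τ) P := by
    rw [← neg_neg (stoppedValue f τ)]
    exact (hf.neg.integrable_stoppedValue hτ_stop hτ_le).neg
  have hmean : ∫ ω, stoppedValue f τ ω ∂P ≤ ∫ ω, f 0 ω ∂P := by
    have := hf.neg.expected_stoppedValue_mono (isStoppingTime_const 𝒢 0) hτ_stop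
      (fun _ => zero_le) hτ_le
    simpa [stoppedValue, integral_neg] using this
  calc a * P.real {ω | ∃ k ≤ n, a ≤ f k ω}
      ≤ a * P.real {ω | a ≤ stoppedValue f τ ω} := by gcongr; finiteness
    _ ≤ ∫ ω, stoppedValue f τ ω ∂P :=
      mul_meas_ge_le_integral_of_nonneg (ae_of_all _ fun ω => hf0 _ ω) hint a
    _ ≤ ∫ ω, f 0 ω ∂P := hmean

lemma measure_exists_le_supermartingale_le [IsFiniteMeasure P] {𝒢 : Filtration ℕ mΩ}
    {f : ℕ → Ω → ℝ} (hf : Supermartingale f 𝒢 P) (hf0 : ∀ n ω, 0 ≤ f n ω) {a : ℝ} (ha : 0 < a) :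
    P {ω | ∃ n, a ≤ f n ω} ≤ ENNReal.ofReal ((∫ ω, f 0 ω ∂P) / a) := by
  have hmono : Monotone fun n => {ω | ∃ k ≤ n, a ≤ f k ω} :=
    fun _ _ hmn _ ⟨k, hk, hak⟩ => ⟨k, hk.trans hmn, hak⟩
  have hunion : {ω | ∃ n, a ≤ f n ω} = ⋃ n, {ω | ∃ k ≤ n, a ≤ f k ω} := by
    ext ω
    simp only [Set.mem_ofPred_eq, Set.mem_iUnion]
    exact ⟨fun ⟨n, hn⟩ => ⟨n, n, le_rfl, hn⟩, fun ⟨_, k, _, hk⟩ => ⟨k, hk⟩⟩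
  rw [hunion, hmono.measure_iUnion]
  refine iSup_le fun n => ?_
  rw [← ofReal_measureReal]
  refine ENNReal.ofReal_le_ofReal ((le_div_iff₀' ha).2 ?_)
  exact mul_measureReal_exists_le_supermartingale_le hf hf0 ha.le n

variable [NormedSpace ℝ B] {β : ℝ}

lemma condExp_le_one_add_mul [IsFiniteMeasure P] (hm : m ≤ mΩ) {f u a w : Ω → ℝ} {c : ℝ}
    (hf : Integrable f P) (hu_meas : StronglyMeasurable[m] u) (hu0 : ∀ ω, 0 ≤ u ω)
    (hu : Integrable u P) (ha : Integrable a P) (hw : Integrable w P) (huw : Integrable (u * w) P)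
    (hle : f ≤ᵐ[P] u + a + u * w) (ha0 : P[a | m] =ᵐ[P] 0) (hc : ∀ᵐ ω ∂P, P[w | m] ω ≤ c) :
    P[f | m] ≤ᵐ[P] fun ω => (1 + c) * u ω := by
  filter_upwards [condExp_mono (m := m) hf ((hu.add ha).add huw) hle,
    condExp_add (hu.add ha) huw m, condExp_add hu ha m, ha0,
    condExp_mul_of_stronglyMeasurable_left hu_meas huw hw, hc]
    with ω hmono hadd₁ hadd₂ ha0ω hpull hcω
  rw [hadd₁, Pi.add_apply, hadd₂, Pi.add_apply, ha0ω, hpull,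
    condExp_of_stronglyMeasurable hm hu_meas hu] at hmono
  have := mul_le_mul_of_nonneg_left hcω (hu0 ω)
  simp only [Pi.mul_apply, Pi.zero_apply] at hmono
  linarith

lemma IsTwoSmooth.condExp_cosh_norm_add_le [CompleteSpace B] [IsFiniteMeasure P]
    (hB : IsTwoSmooth B β) (hβ : 1 ≤ β) (hm : m ≤ mΩ) {S D : Ω → B}
    {K L c : ℝ} (hS : StronglyMeasurable[m] S) (hSK : ∀ᵐ ω ∂P, ‖S ω‖ ≤ K)
    (hD : AEStronglyMeasurable D P) (hDL : ∀ᵐ ω ∂P, ‖D ω‖ ≤ L) (hD0 : P[D | m] =ᵐ[P] 0)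
    (hc : ∀ᵐ ω ∂P, P[fun ω => β ^ 2 * (Real.exp ‖D ω‖ - 1 - ‖D ω‖) | m] ω ≤ c) :
    P[fun ω => Real.cosh ‖S ω + D ω‖ | m] ≤ᵐ[P] fun ω => (1 + c) * Real.cosh ‖S ω‖ := by
  choose ℓ hℓ using exists_isCoshNormSubgradient (B := B)
  have hℓS : StronglyMeasurable[m] fun ω => ℓ (S ω) :=
    (hB.continuous_of_isCoshNormSubgradient hβ hℓ).comp_stronglyMeasurable hS
  set u : Ω → ℝ := fun ω => Real.cosh ‖S ω‖ with hu
  set a : Ω → ℝ := fun ω => ℓ (S ω) (D ω) with ha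
  set w : Ω → ℝ := fun ω => β ^ 2 * (Real.exp ‖D ω‖ - 1 - ‖D ω‖) with hw
  have hu_meas : StronglyMeasurable[m] u := Real.continuous_cosh.comp_stronglyMeasurable hS.norm
  have hSD : ∀ᵐ ω ∂P, ‖S ω‖ + ‖D ω‖ ≤ K + L := by
    filter_upwards [hSK, hDL] with ω hSω hDω using add_le_add hSω hDω
  have hD_int : Integrable D P := .of_bound hD L hDL
  have hsum_int : Integrable (fun ω => Real.cosh ‖S ω + D ω‖) P :=
    integrable_comp_norm_of_bound Real.continuous_cosh ((hS.mono hm).aestronglyMeasurable.add hD)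
      (hSD.mono fun ω hω => (norm_add_le _ _).trans hω)
  have hu_int : Integrable u P :=
    integrable_comp_norm_of_bound Real.continuous_cosh (hS.mono hm).aestronglyMeasurable hSK
  have hu_bdd : ∀ᵐ ω ∂P, ‖u ω‖ ≤ Real.cosh K := by
    filter_upwards [hSK] with ω hSω
    rw [hu, Real.norm_of_nonneg (Real.cosh_pos _).le]
    exact cosh_le_cosh_of_le (norm_nonneg _) hSω
  have ha_int : Integrable a P :=
    .of_bound ((ContinuousLinearMap.id ℝ _).aestronglyMeasurable_comp₂
      (hℓS.mono hm).aestronglyMeasurable hD) (Real.cosh (K + L)) (hSD.mono fun ω hω =>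
        ((hℓ _).abs_apply_le _).trans (cosh_le_cosh_of_le (by positivity) hω))
  have hw_int : Integrable w P :=
    integrable_comp_norm_of_bound (φ := fun x => β ^ 2 * (Real.exp x - 1 - x)) (by fun_prop) hD hDL
  have huw_int : Integrable (u * w) P :=
    hw_int.bdd_mul (hu_meas.mono hm).aestronglyMeasurable hu_bdd
  have hle : (fun ω => Real.cosh ‖S ω + D ω‖) ≤ᵐ[P] u + a + u * w := ae_of_all _ fun ω => by
    simpa only [Pi.add_apply, Pi.mul_apply, hu, ha, hw, mul_comm] using
      (hℓ (S ω)).cosh_norm_add_le hB hβ (D ω)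
  have hpull_a : P[a | m] =ᵐ[P] 0 := by
    refine (condExp_bilin_of_stronglyMeasurable_left (ContinuousLinearMap.id ℝ _)
      hℓS ha_int hD_int).trans ?_
    filter_upwards [hD0] with ω hω
    simp [hω]
  exact condExp_le_one_add_mul hm hsum_int hu_meas (fun ω => (Real.cosh_pos _).le) hu_int ha_int
    hw_int huw_int hle hpull_a hc

section BoundedIncrements

variable [CompleteSpace B] {𝒢 : Filtration ℕ mΩ} {D : ℕ → Ω → B} {L c : ℝ}

lemma IsTwoSmooth.supermartingale_exp_mul_cosh_norm_sum [IsFiniteMeasure P]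
    (hB : IsTwoSmooth B β) (hβ : 1 ≤ β) (hD : ∀ i, StronglyMeasurable[𝒢 (i + 1)] (D i))
    (hDL : ∀ i, ∀ᵐ ω ∂P, ‖D i ω‖ ≤ L) (hD0 : ∀ i, P[D i | 𝒢 i] =ᵐ[P] 0)
    (hc : ∀ i, ∀ᵐ ω ∂P, P[fun ω => β ^ 2 * (Real.exp ‖D i ω‖ - 1 - ‖D i ω‖) | 𝒢 i] ω ≤ c) :
    Supermartingale
      (fun (n : ℕ) ω => Real.exp (-(c * n)) * Real.cosh ‖∑ i ∈ Finset.range n, D i ω‖) 𝒢 P := by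
  have hS (n : ℕ) : StronglyMeasurable[𝒢 n] fun ω => ∑ i ∈ Finset.range n, D i ω :=
    Finset.stronglyMeasurable_fun_sum _ fun i hi =>
      (hD i).mono (𝒢.mono (Nat.succ_le_of_lt (Finset.mem_range.1 hi)))
  have hint (n : ℕ) : Integrable (fun ω => Real.cosh ‖∑ i ∈ Finset.range n, D i ω‖) P :=
    integrable_comp_norm_of_bound Real.continuous_cosh
      ((hS n).mono (𝒢.le n)).aestronglyMeasurable (ae_norm_sum_range_le hDL n)
  refine supermartingale_nat
    (fun n => (Real.continuous_cosh.comp_stronglyMeasurable (hS n).norm).const_mul _)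
    (fun n => (hint n).const_mul _) fun n => ?_
  have hstep := hB.condExp_cosh_norm_add_le hβ (𝒢.le n) (hS n) (ae_norm_sum_range_le hDL n)
    ((hD n).mono (𝒢.le _)).aestronglyMeasurable (hDL n) (hD0 n) (hc n)
  simp only [← Finset.sum_range_succ] at hstep
  filter_upwards [hstep, condExp_smul (m := 𝒢 n) (Real.exp (-(c * (n + 1 : ℕ))))
    (fun ω => Real.cosh ‖∑ i ∈ Finset.range (n + 1), D i ω‖)] with ω hstepω hpull
  have := Real.cosh_pos ‖∑ i ∈ Finset.range n, D i ω‖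
  calc P[fun ω => Real.exp (-(c * (n + 1 : ℕ))) *
        Real.cosh ‖∑ i ∈ Finset.range (n + 1), D i ω‖ | 𝒢 n] ω
      = Real.exp (-(c * (n + 1 : ℕ))) *
          P[fun ω => Real.cosh ‖∑ i ∈ Finset.range (n + 1), D i ω‖ | 𝒢 n] ω := hpull
    _ ≤ Real.exp (-(c * (n + 1 : ℕ))) *
          (Real.exp c * Real.cosh ‖∑ i ∈ Finset.range n, D i ω‖) := by
      gcongr
      refine hstepω.trans ?_
      gcongr
      linarith [Real.add_one_le_exp c]
    _ = Real.exp (-(c * n)) * Real.cosh ‖∑ i ∈ Finset.range n, D i ω‖ := by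
      rw [← mul_assoc, ← Real.exp_add]
      push_cast
      ring_nf

lemma IsTwoSmooth.measure_exists_le_norm_sum_le [IsProbabilityMeasure P]
    (hB : IsTwoSmooth B β) (hβ : 1 ≤ β) (hD : ∀ i, StronglyMeasurable[𝒢 (i + 1)] (D i))
    (hDL : ∀ i, ∀ᵐ ω ∂P, ‖D i ω‖ ≤ L) (hD0 : ∀ i, P[D i | 𝒢 i] =ᵐ[P] 0)
    (hc : ∀ i, ∀ᵐ ω ∂P, P[fun ω => β ^ 2 * (Real.exp ‖D i ω‖ - 1 - ‖D i ω‖) | 𝒢 i] ω ≤ c)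
    {δ : ℝ} (hδ : 0 < δ) :
    P {ω | ∃ n : ℕ, c * n + Real.log (2 / δ) ≤ ‖∑ i ∈ Finset.range n, D i ω‖} ≤
      ENNReal.ofReal δ := by
  have hsub : {ω | ∃ n : ℕ, c * n + Real.log (2 / δ) ≤ ‖∑ i ∈ Finset.range n, D i ω‖} ⊆
      {ω | ∃ n : ℕ, 1 / δ ≤ Real.exp (-(c * n)) *
        Real.cosh ‖∑ i ∈ Finset.range n, D i ω‖} := by
    rintro ω ⟨n, hn⟩
    refine ⟨n, ?_⟩
    have hexp : Real.exp (c * n) * (2 / δ) ≤ Real.exp ‖∑ i ∈ Finset.range n, D i ω‖ := by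
      rw [← Real.exp_log (show 0 < 2 / δ by positivity), ← Real.exp_add]
      exact Real.exp_le_exp.2 hn
    have hcosh : Real.exp ‖∑ i ∈ Finset.range n, D i ω‖ ≤
        2 * Real.cosh ‖∑ i ∈ Finset.range n, D i ω‖ := by
      rw [Real.cosh_eq]
      linarith [Real.exp_pos (-‖∑ i ∈ Finset.range n, D i ω‖)]
    rw [Real.exp_neg, le_inv_mul_iff₀ (Real.exp_pos _)]
    linear_combination (hexp + hcosh) / 2
  refine (measure_mono hsub).trans ?_
  refine (measure_exists_le_supermartingale_le
    (hB.supermartingale_exp_mul_cosh_norm_sum hβ hD hDL hD0 hc)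
    (fun n ω => mul_nonneg (Real.exp_pos _).le (Real.cosh_pos _).le)
    (one_div_pos.2 hδ)).trans_eq ?_
  simp

end BoundedIncrements

end Martingale

section Clipping

lemma exp_sub_one_sub_le_sq_mul {x y : ℝ} (hx : 0 ≤ x) (hxy : x ≤ y) (hy : 0 < y) :
    Real.exp x - 1 - x ≤ x ^ 2 * ((Real.exp y - y - 1) / y ^ 2) := by
  have hsum (z : ℝ) : HasSum (fun n : ℕ => z ^ (n + 2) / (n + 2).factorial)
      (Real.exp z - 1 - z) := by
    have hexp := NormedSpace.expSeries_div_hasSum_exp (𝔸 := ℝ) z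
    rw [← Real.exp_eq_exp_ℝ] at hexp
    simpa [Finset.sum_range_succ, sub_sub] using (hasSum_nat_add_iff' 2).2 hexp
  refine (hasSum_le (fun n => ?_) (hsum x) ((hsum y).mul_left (x ^ 2 / y ^ 2))).trans_eq (by ring)
  calc x ^ (n + 2) / (n + 2).factorial = x ^ 2 * x ^ n / (n + 2).factorial := by ring
    _ ≤ x ^ 2 * y ^ n / (n + 2).factorial := by gcongr
    _ = x ^ 2 / y ^ 2 * (y ^ (n + 2) / (n + 2).factorial) := by rw [pow_add y]; field_simp

lemma frakC_one (ρ : ℝ) :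
    frakC 1 ρ = 4 * ((Real.exp (2 * ρ) - 2 * ρ - 1) / (2 * ρ) ^ 2) := by
  rw [frakC, ← mul_div_assoc]; norm_num

lemma frakC_eq_two_rpow_mul_frakC_one (p ρ : ℝ) : frakC p ρ = 2 ^ (p - 1) * frakC 1 ρ := by
  have hpow : (2 : ℝ) ^ (p + 1) = 2 ^ (p - 1) * 4 := by
    rw [show p + 1 = p - 1 + (2 : ℕ) by push_cast; ring, Real.rpow_add_natCast two_ne_zero]
    norm_num
  rw [frakC_one, frakC, hpow]; ring

lemma Kp_nonneg {p : ℝ} (hp : 1 ≤ p) : 0 ≤ Kp p :=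
  mul_nonneg (by positivity) (Real.rpow_nonneg (div_nonneg (by linarith) (by linarith)) _)

lemma sub_one_le_Kp_mul_rpow {p t : ℝ} (hp : 1 ≤ p) (ht : 0 ≤ t) : t - 1 ≤ Kp p * t ^ p := by
  rcases hp.eq_or_lt with rfl | hp
  · simp [Kp]
  have hp0 : 0 < p := by linarith
  have hp1 : 0 < p - 1 := by linarith
  set u := t * ((p - 1) / p) with hu
  have hu0 : 0 ≤ u := by positivity
  have hbernoulli := one_add_mul_self_le_rpow_one_add (s := u - 1) (by linarith) hp.le
  rw [add_sub_cancel] at hbernoulli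
  have hrpow : ((p - 1) / p) ^ p = ((p - 1) / p) ^ (p - 1) * ((p - 1) / p) := by
    rw [← Real.rpow_add_one (by positivity), sub_add_cancel]
  calc t - 1 = (1 + p * (u - 1)) / (p - 1) := by rw [hu]; field_simp; ring
    _ ≤ u ^ p / (p - 1) := by gcongr
    _ = Kp p * t ^ p := by
      rw [hu, Real.mul_rpow ht (by positivity), hrpow, Kp]
      field_simp

lemma truncB_eq_inv_max {B : Type*} [NormedAddCommGroup B] (x : B) :
    truncB x = (max 1 ‖x‖)⁻¹ := by
  unfold truncB
  split_ifs with hx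
  · simp [hx]
  rcases le_total 1 ‖x‖ with h1 | h1
  · rw [min_eq_left h1, max_eq_right h1, one_div]
  · rw [min_eq_right h1, max_eq_left h1, div_self (norm_ne_zero_iff.2 hx), inv_one]

variable {B : Type*} [NormedAddCommGroup B] [NormedSpace ℝ B]

/-- For `0 < lam`, the radial projection of `x` onto the closed ball of radius `1 / lam`: the
summand of the truncated mean estimator, before recentring. -/
noncomputable def clip (lam : ℝ) (x : B) : B := truncB (lam • x) • x

lemma clip_eq_inv_max_smul {lam : ℝ} (hlam : 0 ≤ lam) (x : B) :
    clip lam x = (max 1 (lam * ‖x‖))⁻¹ • x := by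
  rw [clip, truncB_eq_inv_max, norm_smul, Real.norm_of_nonneg hlam]

lemma norm_clip {lam : ℝ} (hlam : 0 ≤ lam) (x : B) :
    ‖clip lam x‖ = ‖x‖ / max 1 (lam * ‖x‖) := by
  rw [clip_eq_inv_max_smul hlam, norm_smul, norm_inv,
    Real.norm_of_nonneg (le_max_of_le_left zero_le_one), div_eq_inv_mul]

lemma continuous_clip (lam : ℝ) : Continuous (clip lam : B → B) := by
  unfold clip
  simp only [truncB_eq_inv_max]
  refine Continuous.smul (Continuous.inv₀ (by fun_prop) fun x => ?_) continuous_id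
  exact (lt_max_of_lt_left one_pos).ne'

lemma norm_clip_le_norm {lam : ℝ} (hlam : 0 ≤ lam) (x : B) : ‖clip lam x‖ ≤ ‖x‖ := by
  rw [norm_clip hlam]
  exact div_le_self (norm_nonneg x) (le_max_left _ _)

lemma norm_clip_le_inv {lam : ℝ} (hlam : 0 < lam) (x : B) : ‖clip lam x‖ ≤ lam⁻¹ := by
  rw [norm_clip hlam.le, div_le_iff₀ (lt_max_of_lt_left one_pos), ← div_eq_inv_mul,
    le_div_iff₀' hlam]
  exact le_max_right _ _

lemma norm_clip_sub_self_le {lam p : ℝ} (hlam : 0 < lam) (hp : 1 ≤ p) (x : B) :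
    ‖clip lam x - x‖ ≤ Kp p * lam ^ (p - 1) * ‖x‖ ^ p := by
  rw [clip_eq_inv_max_smul hlam.le]
  rcases le_total (lam * ‖x‖) 1 with hx | hx
  · rw [max_eq_left hx, inv_one, one_smul, sub_self, norm_zero]
    have := Kp_nonneg hp
    positivity
  have hinv : 0 ≤ 1 - (lam * ‖x‖)⁻¹ := sub_nonneg.2 (inv_le_one_of_one_le₀ hx)
  have hx0 : ‖x‖ ≠ 0 := by rintro h; rw [h, mul_zero] at hx; linarith
  calc ‖(max 1 (lam * ‖x‖))⁻¹ • x - x‖ = (1 - (lam * ‖x‖)⁻¹) * ‖x‖ := by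
        rw [max_eq_right hx, ← norm_neg, neg_sub, ← Real.norm_of_nonneg hinv, ← norm_smul,
          sub_smul, one_smul]
    _ = (lam * ‖x‖ - 1) / lam := by field_simp
    _ ≤ Kp p * (lam * ‖x‖) ^ p / lam := by
        gcongr
        exact sub_one_le_Kp_mul_rpow hp (by positivity)
    _ = Kp p * lam ^ (p - 1) * ‖x‖ ^ p := by
        rw [Real.mul_rpow hlam.le (norm_nonneg x), Real.rpow_sub_one hlam.ne']; ring

end Clipping

section ConditionalMoments

variable {B : Type*} [NormedAddCommGroup B] {Ω : Type*} {m mΩ : MeasurableSpace Ω} {P : Measure Ω}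

lemma rpow_add_le_two_rpow_mul {a b p : ℝ} (ha : 0 ≤ a) (hb : 0 ≤ b) (hp : 1 ≤ p) :
    (a + b) ^ p ≤ 2 ^ (p - 1) * (a ^ p + b ^ p) := by
  lift a to NNReal using ha
  lift b to NNReal using hb
  exact_mod_cast NNReal.rpow_add_le_mul_rpow_add_rpow a b hp

lemma norm_add_rpow_le (x y : B) {p : ℝ} (hp : 1 ≤ p) :
    ‖x + y‖ ^ p ≤ 2 ^ (p - 1) * (‖x‖ ^ p + ‖y‖ ^ p) :=
  (Real.rpow_le_rpow (norm_nonneg _) (norm_add_le x y) (by linarith)).trans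
    (rpow_add_le_two_rpow_mul (norm_nonneg x) (norm_nonneg y) hp)

lemma integrable_norm_add_rpow {p : ℝ} (hp : 1 ≤ p) {f g : Ω → B}
    (hf : AEStronglyMeasurable f P) (hg : AEStronglyMeasurable g P)
    (hfp : Integrable (fun ω => ‖f ω‖ ^ p) P) (hgp : Integrable (fun ω => ‖g ω‖ ^ p) P) :
    Integrable (fun ω => ‖f ω + g ω‖ ^ p) P := by
  refine ((hfp.add hgp).const_mul (2 ^ (p - 1))).mono'
    ((Real.continuous_rpow_const (by linarith)).comp_aestronglyMeasurable (hf.add hg).norm) ?_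
  refine ae_of_all _ fun ω => ?_
  rw [Real.norm_of_nonneg (by positivity)]
  exact norm_add_rpow_le _ _ hp

lemma ae_condExp_le_of_le_mul_add [IsFiniteMeasure P] (hm : m ≤ mΩ) {f g : Ω → ℝ} {a b q : ℝ}
    (hf : Integrable f P) (hg : Integrable g P) (ha : 0 ≤ a)
    (hgf : ∀ᵐ ω ∂P, g ω ≤ a * f ω + b) (hq : ∀ᵐ ω ∂P, P[f | m] ω ≤ q) :
    ∀ᵐ ω ∂P, P[g | m] ω ≤ a * q + b := by
  filter_upwards [condExp_mono (m := m) hg ((hf.const_mul a).add (integrable_const b)) hgf,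
    condExp_add (hf.const_mul a) (integrable_const b) m, condExp_smul (m := m) a f, hq]
    with ω hmono hadd hsmul hqω
  rw [hadd, Pi.add_apply, condExp_const hm] at hmono
  refine hmono.trans (add_le_add_left ?_ b)
  exact hsmul.trans_le (mul_le_mul_of_nonneg_left hqω ha)

lemma ae_condExp_le_of_le_mul [IsFiniteMeasure P] (hm : m ≤ mΩ) {f g : Ω → ℝ} {a q : ℝ}
    (hf : Integrable f P) (hg : Integrable g P) (ha : 0 ≤ a)
    (hgf : ∀ᵐ ω ∂P, g ω ≤ a * f ω) (hq : ∀ᵐ ω ∂P, P[f | m] ω ≤ q) :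
    ∀ᵐ ω ∂P, P[g | m] ω ≤ a * q := by
  simpa using ae_condExp_le_of_le_mul_add (b := 0) hm hf hg ha (by simpa using hgf) hq

lemma ae_condExp_norm_add_rpow_le [IsFiniteMeasure P] (hm : m ≤ mΩ) {p v r : ℝ} (hp : 1 ≤ p)
    {f g : Ω → B} (hf : AEStronglyMeasurable f P) (hg : AEStronglyMeasurable g P)
    (hfp : Integrable (fun ω => ‖f ω‖ ^ p) P) (hgr : ∀ᵐ ω ∂P, ‖g ω‖ ≤ r)
    (hv : ∀ᵐ ω ∂P, P[fun ω => ‖f ω‖ ^ p | m] ω ≤ v) :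
    ∀ᵐ ω ∂P, P[fun ω => ‖f ω + g ω‖ ^ p | m] ω ≤ 2 ^ (p - 1) * (v + r ^ p) := by
  have hgp : Integrable (fun ω => ‖g ω‖ ^ p) P :=
    integrable_comp_norm_of_bound (Real.continuous_rpow_const (by linarith)) hg hgr
  rw [mul_add]
  refine ae_condExp_le_of_le_mul_add hm hfp (integrable_norm_add_rpow hp hf hg hfp hgp)
    (by positivity) ?_ hv
  filter_upwards [hgr] with ω hω
  rw [← mul_add]
  refine (norm_add_rpow_le _ _ hp).trans ?_
  gcongr

lemma ae_condExp_exp_norm_sub_le [IsFiniteMeasure P] (hm : m ≤ mΩ) {L s : ℝ} (hL : 0 < L)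
    {f : Ω → B} (hf : AEStronglyMeasurable f P) (hfL : ∀ᵐ ω ∂P, ‖f ω‖ ≤ L)
    (hs : ∀ᵐ ω ∂P, P[fun ω => ‖f ω‖ ^ 2 | m] ω ≤ s) :
    ∀ᵐ ω ∂P, P[fun ω => Real.exp ‖f ω‖ - 1 - ‖f ω‖ | m] ω ≤
      (Real.exp L - L - 1) / L ^ 2 * s := by
  refine ae_condExp_le_of_le_mul hm
    (integrable_comp_norm_of_bound (continuous_pow 2) hf hfL)
    (integrable_comp_norm_of_bound (φ := fun x => Real.exp x - 1 - x) (by fun_prop) hf hfL)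
    (div_nonneg (by linarith [Real.add_one_le_exp L]) (by positivity)) ?_ hs
  filter_upwards [hfL] with ω hω
  linarith [exp_sub_one_sub_le_sq_mul (norm_nonneg _) hω hL]

variable [NormedSpace ℝ B]

lemma integrable_clip [IsFiniteMeasure P] {lam : ℝ} (hlam : 0 < lam) {f : Ω → B}
    (hf : AEStronglyMeasurable f P) : Integrable (fun ω => clip lam (f ω)) P :=
  .of_bound ((continuous_clip lam).comp_aestronglyMeasurable hf) lam⁻¹
    (ae_of_all _ fun ω => norm_clip_le_inv hlam (f ω))

variable [CompleteSpace B] [IsFiniteMeasure P]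

lemma condExp_sub_of_stronglyMeasurable (hm : m ≤ mΩ) {f g : Ω → B} (hf : Integrable f P)
    (hg : StronglyMeasurable[m] g) (hgint : Integrable g P) :
    P[fun ω => f ω - g ω | m] =ᵐ[P] fun ω => P[f | m] ω - g ω := by
  refine (condExp_sub hf hgint m).trans ?_
  rw [condExp_of_stronglyMeasurable hm hg hgint]
  rfl

lemma ae_norm_condExp_clip_sub_condExp_le (hm : m ≤ mΩ) {lam p q : ℝ} (hlam : 0 < lam)
    (hp : 1 ≤ p) {f : Ω → B} (hf : Integrable f P) (hfp : Integrable (fun ω => ‖f ω‖ ^ p) P)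
    (hq : ∀ᵐ ω ∂P, P[fun ω => ‖f ω‖ ^ p | m] ω ≤ q) :
    ∀ᵐ ω ∂P, ‖P[fun ω => clip lam (f ω) | m] ω - P[f | m] ω‖ ≤ Kp p * lam ^ (p - 1) * q := by
  have hclip := integrable_clip hlam hf.aestronglyMeasurable
  have hbias := ae_condExp_le_of_le_mul hm hfp (hclip.sub hf).norm
    (mul_nonneg (Kp_nonneg hp) (by positivity))
    (ae_of_all _ fun ω => norm_clip_sub_self_le hlam hp (f ω)) hq
  filter_upwards [hbias, condExp_sub hclip hf m,
    norm_condExp_le (m := m) (μ := P) ((fun ω => clip lam (f ω)) - f)] with ω hbiasω hsub hnorm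
  rw [hsub] at hnorm
  exact hnorm.trans hbiasω

lemma ae_norm_sub_condExp_le (hm : m ≤ mΩ) {R : ℝ} {f : Ω → B} (hf : AEStronglyMeasurable f P)
    (hfR : ∀ᵐ ω ∂P, ‖f ω‖ ≤ R) : ∀ᵐ ω ∂P, ‖f ω - P[f | m] ω‖ ≤ 2 * R := by
  have hball := (convex_closedBall (0 : B) R).condExp_mem hm (.of_bound hf R hfR)
    Metric.isClosed_closedBall (by simpa using hfR)
  filter_upwards [hfR, hball] with ω hfω hMω
  rw [mem_closedBall_zero_iff] at hMω
  exact (norm_sub_le _ _).trans (by linarith)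

lemma ae_condExp_norm_sub_condExp_sq_le (hm : m ≤ mΩ) {p q R : ℝ} (hp1 : 1 ≤ p) (hp2 : p ≤ 2)
    (hR : 0 ≤ R) {f : Ω → B} (hf : AEStronglyMeasurable f P) (hfR : ∀ᵐ ω ∂P, ‖f ω‖ ≤ R)
    (hq : ∀ᵐ ω ∂P, P[fun ω => ‖f ω‖ ^ p | m] ω ≤ q) :
    ∀ᵐ ω ∂P, P[fun ω => ‖f ω - P[f | m] ω‖ ^ 2 | m] ω ≤ 4 * R ^ (2 - p) * q := by
  have hcont := Real.continuous_rpow_const (q := p) (by linarith)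
  have hfp : Integrable (fun ω => ‖f ω‖ ^ p) P := integrable_comp_norm_of_bound hcont hf hfR
  have hdiff := ae_norm_sub_condExp_le hm hf hfR
  set C := (2 * R) ^ (2 - p) * 2 ^ (p - 1) with hC
  have hC0 : 0 ≤ C := by positivity
  have hC2 : 4 * R ^ (2 - p) * q = C * q + C * q := by
    have hpow : (2 : ℝ) ^ (2 - p) * 2 ^ (p - 1) = 2 := by
      rw [← Real.rpow_add two_pos, sub_add_sub_cancel]; norm_num
    rw [hC, Real.mul_rpow two_pos.le hR]
    linear_combination (-2 * R ^ (2 - p) * q) * hpow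
  rw [hC2]
  refine ae_condExp_le_of_le_mul_add hm hfp (integrable_comp_norm_of_bound (continuous_pow 2)
    (hf.sub integrable_condExp.aestronglyMeasurable) hdiff) hC0 ?_ hq
  filter_upwards [hdiff, Integrable.norm_condExp_rpow_le (m := m) hp1 hfp, hq]
    with ω hdiffω hjensen hqω
  calc ‖f ω - P[f | m] ω‖ ^ 2
      = ‖f ω - P[f | m] ω‖ ^ (2 - p) * ‖f ω - P[f | m] ω‖ ^ p := by
        rw [← Real.rpow_add_of_nonneg (norm_nonneg _) (by linarith) (by linarith),
          sub_add_cancel, Real.rpow_two]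
    _ ≤ (2 * R) ^ (2 - p) * (2 ^ (p - 1) * (‖f ω‖ ^ p + ‖P[f | m] ω‖ ^ p)) := by
        gcongr
        simpa only [sub_eq_add_neg, norm_neg] using norm_add_rpow_le (f ω) (-P[f | m] ω) hp1
    _ ≤ C * ‖f ω‖ ^ p + C * q := by
        rw [← mul_assoc, mul_add]
        gcongr
        exact hjensen.trans hqω

end ConditionalMoments

section ClippedSums

variable {B : Type*} [NormedAddCommGroup B] [NormedSpace ℝ B] {Ω : Type*}
  {m mΩ : MeasurableSpace Ω} {P : Measure Ω} {β p q lam δ : ℝ}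

/-- The centred clipped variable: the martingale increment to which the concentration inequality
is applied. The factor `lam / β` makes its norm at most `2 / β`. -/
noncomputable def clipIncrement (P : Measure Ω) (m : MeasurableSpace Ω) (β lam : ℝ) (f : Ω → B)
    (ω : Ω) : B :=
  (lam / β) • (clip lam (f ω) - P[fun ω => clip lam (f ω) | m] ω)

lemma stronglyMeasurable_clipIncrement {m' : MeasurableSpace Ω} (hm : m ≤ m') {f : Ω → B}
    (hf : StronglyMeasurable[m'] f) : StronglyMeasurable[m'] (clipIncrement P m β lam f) :=
  (((continuous_clip lam).comp_stronglyMeasurable hf).sub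
    (stronglyMeasurable_condExp.mono hm)).const_smul _

variable [CompleteSpace B] [IsFiniteMeasure P]

lemma ae_norm_clipIncrement_le (hm : m ≤ mΩ) (hβ : 0 < β) (hlam : 0 < lam) {f : Ω → B}
    (hf : AEStronglyMeasurable f P) : ∀ᵐ ω ∂P, ‖clipIncrement P m β lam f ω‖ ≤ 2 * (1 / β) := by
  filter_upwards [ae_norm_sub_condExp_le hm (integrable_clip hlam hf).aestronglyMeasurable
    (ae_of_all _ fun ω => norm_clip_le_inv hlam (f ω))] with ω hω
  calc ‖clipIncrement P m β lam f ω‖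
      = lam / β * ‖clip lam (f ω) - P[fun ω => clip lam (f ω) | m] ω‖ := by
        rw [clipIncrement, norm_smul, Real.norm_of_nonneg (by positivity)]
    _ ≤ lam / β * (2 * lam⁻¹) := by gcongr
    _ = 2 * (1 / β) := by field_simp

lemma condExp_clipIncrement (hm : m ≤ mΩ) (hlam : 0 < lam) {f : Ω → B}
    (hf : AEStronglyMeasurable f P) : P[clipIncrement P m β lam f | m] =ᵐ[P] 0 := by
  have hclip := integrable_clip hlam hf
  filter_upwards [condExp_smul (m := m) (μ := P) (lam / β)
      ((fun ω => clip lam (f ω)) - P[fun ω => clip lam (f ω) | m]),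
    condExp_sub hclip integrable_condExp m] with ω hsmul hsub
  refine hsmul.trans ?_
  rw [Pi.smul_apply, hsub, Pi.sub_apply, condExp_of_stronglyMeasurable hm stronglyMeasurable_condExp
    integrable_condExp, sub_self, smul_zero, Pi.zero_apply]

lemma ae_condExp_norm_clipIncrement_sq_le (hm : m ≤ mΩ) (hp1 : 1 ≤ p) (hp2 : p ≤ 2)
    (hlam : 0 < lam) {f : Ω → B} (hf : AEStronglyMeasurable f P)
    (hfp : Integrable (fun ω => ‖f ω‖ ^ p) P)
    (hq : ∀ᵐ ω ∂P, P[fun ω => ‖f ω‖ ^ p | m] ω ≤ q) :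
    ∀ᵐ ω ∂P, P[fun ω => ‖clipIncrement P m β lam f ω‖ ^ 2 | m] ω ≤
      (lam / β) ^ 2 * (4 * lam⁻¹ ^ (2 - p) * q) := by
  have hclip := (integrable_clip hlam hf).aestronglyMeasurable
  have hclip_le := ae_of_all P fun ω => norm_clip_le_inv hlam (f ω)
  have hclip_moment : ∀ᵐ ω ∂P, P[fun ω => ‖clip lam (f ω)‖ ^ p | m] ω ≤ q := by
    refine (condExp_mono (integrable_comp_norm_of_bound
      (Real.continuous_rpow_const (by linarith)) hclip hclip_le) hfp
      (ae_of_all _ fun ω => ?_)).trans hq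
    exact Real.rpow_le_rpow (norm_nonneg _) (norm_clip_le_norm hlam.le _) (by linarith)
  have hcentred : AEStronglyMeasurable
      (fun ω => clip lam (f ω) - P[fun ω => clip lam (f ω) | m] ω) P :=
    hclip.sub integrable_condExp.aestronglyMeasurable
  have hcentred_int : Integrable
      (fun ω => ‖clip lam (f ω) - P[fun ω => clip lam (f ω) | m] ω‖ ^ 2) P :=
    integrable_comp_norm_of_bound (continuous_pow 2) hcentred
      (ae_norm_sub_condExp_le hm hclip hclip_le)
  have hnorm (ω : Ω) : ‖clipIncrement P m β lam f ω‖ ^ 2 =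
      (lam / β) ^ 2 * ‖clip lam (f ω) - P[fun ω => clip lam (f ω) | m] ω‖ ^ 2 := by
    rw [clipIncrement, norm_smul, mul_pow, Real.norm_eq_abs, sq_abs]
  simp only [hnorm]
  exact ae_condExp_le_of_le_mul hm hcentred_int (hcentred_int.const_mul _) (sq_nonneg _)
    (ae_of_all _ fun _ => le_rfl) (ae_condExp_norm_sub_condExp_sq_le hm hp1 hp2
      (inv_nonneg.2 hlam.le) hclip hclip_le hclip_moment)

lemma ae_condExp_exp_norm_clipIncrement_le (hm : m ≤ mΩ) (hβ : 0 < β) (hp1 : 1 ≤ p) (hp2 : p ≤ 2)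
    (hlam : 0 < lam) {f : Ω → B} (hf : AEStronglyMeasurable f P)
    (hfp : Integrable (fun ω => ‖f ω‖ ^ p) P)
    (hq : ∀ᵐ ω ∂P, P[fun ω => ‖f ω‖ ^ p | m] ω ≤ q) :
    ∀ᵐ ω ∂P, P[fun ω => β ^ 2 * (Real.exp ‖clipIncrement P m β lam f ω‖ - 1 -
        ‖clipIncrement P m β lam f ω‖) | m] ω ≤ lam ^ p * frakC 1 (1 / β) * q := by
  have hD : AEStronglyMeasurable (clipIncrement P m β lam f) P :=
    ((integrable_clip hlam hf).sub integrable_condExp).aestronglyMeasurable.const_smul _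
  have hDL := ae_norm_clipIncrement_le hm hβ hlam hf
  have hint := integrable_comp_norm_of_bound (φ := fun x => Real.exp x - 1 - x) (by fun_prop) hD hDL
  have hconst : lam ^ p * frakC 1 (1 / β) * q = β ^ 2 *
      ((Real.exp (2 * (1 / β)) - 2 * (1 / β) - 1) / (2 * (1 / β)) ^ 2 *
        ((lam / β) ^ 2 * (4 * lam⁻¹ ^ (2 - p) * q))) := by
    have hpow : lam ^ 2 * lam⁻¹ ^ (2 - p) = lam ^ p := by
      rw [Real.inv_rpow hlam.le, ← Real.rpow_neg hlam.le, ← Real.rpow_two, ← Real.rpow_add hlam]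
      ring_nf
    rw [frakC_one, ← hpow]
    field_simp
  rw [hconst]
  exact ae_condExp_le_of_le_mul hm hint (hint.const_mul _) (sq_nonneg β)
    (ae_of_all _ fun _ => le_rfl) (ae_condExp_exp_norm_sub_le hm (by positivity) hD hDL
      (ae_condExp_norm_clipIncrement_sq_le hm hp1 hp2 hlam hf hfp hq))

theorem IsTwoSmooth.measure_exists_lt_norm_sum_clip_sub_condExp_le [IsProbabilityMeasure P]
    (hB : IsTwoSmooth B β) (hβ : 1 ≤ β) (hp1 : 1 ≤ p) (hp2 : p ≤ 2) (hlam : 0 < lam)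
    (hδ : 0 < δ) {𝒢 : Filtration ℕ mΩ} {W : ℕ → Ω → B}
    (hW : ∀ i, StronglyMeasurable[𝒢 (i + 1)] (W i)) (hint : ∀ i, Integrable (W i) P)
    (hWp : ∀ i, Integrable (fun ω => ‖W i ω‖ ^ p) P)
    (hq : ∀ i, ∀ᵐ ω ∂P, P[fun ω => ‖W i ω‖ ^ p | 𝒢 i] ω ≤ q) :
    P {ω | ∃ n : ℕ, n * (lam ^ (p - 1) * (β * frakC 1 (1 / β) + Kp p) * q) +
        β * Real.log (2 / δ) / lam <
        ‖∑ i ∈ Finset.range n, (clip lam (W i ω) - P[W i | 𝒢 i] ω)‖} ≤ ENNReal.ofReal δ := by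
  have hβ0 : 0 < β := by linarith
  have hmeas (i : ℕ) := (hint i).aestronglyMeasurable
  set D : ℕ → Ω → B := fun i => clipIncrement P (𝒢 i) β lam (W i) with hD
  have hconc := hB.measure_exists_le_norm_sum_le hβ
    (fun i => stronglyMeasurable_clipIncrement (𝒢.mono i.le_succ) (hW i))
    (fun i => ae_norm_clipIncrement_le (𝒢.le i) hβ0 hlam (hmeas i))
    (fun i => condExp_clipIncrement (𝒢.le i) hlam (hmeas i))
    (fun i => ae_condExp_exp_norm_clipIncrement_le (𝒢.le i) hβ0 hp1 hp2 hlam (hmeas i) (hWp i)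
      (hq i)) hδ
  refine (measure_mono_ae ?_).trans hconc
  filter_upwards [ae_all_iff.2 fun i =>
    ae_norm_condExp_clip_sub_condExp_le (𝒢.le i) hlam hp1 (hint i) (hWp i) (hq i)] with ω hbias
  rintro ⟨n, hn⟩
  refine ⟨n, not_lt.1 fun hlt => hn.not_ge ?_⟩
  have hsplit : ∑ i ∈ Finset.range n, (clip lam (W i ω) - P[W i | 𝒢 i] ω) =
      (β / lam) • ∑ i ∈ Finset.range n, D i ω +
        ∑ i ∈ Finset.range n, (P[fun ω => clip lam (W i ω) | 𝒢 i] ω - P[W i | 𝒢 i] ω) := by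
    rw [Finset.smul_sum, ← Finset.sum_add_distrib]
    refine Finset.sum_congr rfl fun i _ => ?_
    have hone : β / lam * (lam / β) = 1 := by field_simp
    simp only [hD, clipIncrement, smul_smul, hone, one_smul, sub_add_sub_cancel]
  have hpow : lam ^ p = lam ^ (p - 1) * lam := by
    rw [← Real.rpow_add_one hlam.ne', sub_add_cancel]
  calc ‖∑ i ∈ Finset.range n, (clip lam (W i ω) - P[W i | 𝒢 i] ω)‖
      ≤ β / lam * ‖∑ i ∈ Finset.range n, D i ω‖ + n * (Kp p * lam ^ (p - 1) * q) := by
        rw [hsplit, ← Real.norm_of_nonneg (div_pos hβ0 hlam).le, ← norm_smul,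
          Real.norm_of_nonneg (div_pos hβ0 hlam).le]
        refine norm_add_le_of_le le_rfl ((norm_sum_le_of_le _ fun i _ => hbias i).trans_eq ?_)
        simp
    _ ≤ β / lam * (lam ^ p * frakC 1 (1 / β) * q * n + Real.log (2 / δ)) +
          n * (Kp p * lam ^ (p - 1) * q) := by gcongr
    _ = n * (lam ^ (p - 1) * (β * frakC 1 (1 / β) + Kp p) * q) +
          β * Real.log (2 / δ) / lam := by
        rw [hpow]; field_simp; ring

variable {𝒢 : Filtration ℕ mΩ} {X : ℕ → Ω → B} {μ : B} {Z : Ω → B} {v r : ℝ}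

theorem IsTwoSmooth.measure_exists_lt_norm_sum_clip_sub_le_of_norm_sub_le [IsProbabilityMeasure P]
    (hB : IsTwoSmooth B β) (hβ : 1 ≤ β) (hp1 : 1 ≤ p) (hp2 : p ≤ 2) (hlam : 0 < lam) (hδ : 0 < δ)
    (hX : ∀ i, StronglyMeasurable[𝒢 (i + 1)] (X i)) (hint : ∀ i, Integrable (X i) P)
    (hXp : ∀ i, Integrable (fun ω => ‖X i ω - μ‖ ^ p) P)
    (hmean : ∀ i, P[X i | 𝒢 i] =ᵐ[P] fun _ => μ)
    (hv : ∀ i, ∀ᵐ ω ∂P, P[fun ω => ‖X i ω - μ‖ ^ p | 𝒢 i] ω ≤ v)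
    (hZ : StronglyMeasurable[𝒢 0] Z) (hZr : ∀ ω, ‖μ - Z ω‖ ≤ r) :
    P {ω | ∃ n : ℕ, n * (lam ^ (p - 1) * (β * frakC p (1 / β) + Kp p * 2 ^ (p - 1)) *
        (v + r ^ p)) + β * Real.log (2 / δ) / lam <
        ‖∑ i ∈ Finset.range n, (clip lam (X i ω - Z ω) + Z ω - μ)‖} ≤ ENNReal.ofReal δ := by
  have hμZ : AEStronglyMeasurable (fun ω => μ - Z ω) P :=
    aestronglyMeasurable_const.sub (hZ.mono (𝒢.le 0)).aestronglyMeasurable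
  have hμZr := ae_of_all P hZr
  have hZint : Integrable Z P := by
    simpa [Pi.sub_def] using (integrable_const μ).sub (.of_bound hμZ r hμZr)
  have hXμ (i : ℕ) : AEStronglyMeasurable (fun ω => X i ω - μ) P :=
    (hint i).aestronglyMeasurable.sub aestronglyMeasurable_const
  have hmoment (i : ℕ) := ae_condExp_norm_add_rpow_le (𝒢.le i) hp1 (hXμ i) hμZ (hXp i) hμZr (hv i)
  have hWp (i : ℕ) := integrable_norm_add_rpow hp1 (hXμ i) hμZ (hXp i)
    (integrable_comp_norm_of_bound (Real.continuous_rpow_const (by linarith)) hμZ hμZr)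
  simp only [sub_add_sub_cancel] at hmoment hWp
  refine (measure_mono_ae ?_).trans
    (hB.measure_exists_lt_norm_sum_clip_sub_condExp_le hβ hp1 hp2 hlam hδ
      (W := fun i ω => X i ω - Z ω) (fun i => (hX i).sub (hZ.mono (𝒢.mono (i + 1).zero_le)))
      (fun i => (hint i).sub hZint) hWp hmoment)
  filter_upwards [ae_all_iff.2 hmean, ae_all_iff.2 fun i => condExp_sub_of_stronglyMeasurable
    (𝒢.le i) (hint i) (hZ.mono (𝒢.mono i.zero_le)) hZint] with ω hmeanω hsub
  rintro ⟨n, hn⟩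
  refine ⟨n, ?_⟩
  have hsummand (i : ℕ) : clip lam (X i ω - Z ω) - (μ - Z ω) =
      clip lam (X i ω - Z ω) + Z ω - μ := by abel
  simp only [hsub, hmeanω, hsummand]
  refine hn.trans_eq' ?_
  rw [frakC_eq_two_rpow_mul_frakC_one p]
  ring

theorem IsTwoSmooth.measure_exists_lt_norm_sum_clip_sub_le [IsProbabilityMeasure P]
    (hB : IsTwoSmooth B β) (hβ : 1 ≤ β) (hp1 : 1 ≤ p) (hp2 : p ≤ 2) (hlam : 0 < lam) (hδ : 0 < δ)
    (hX : ∀ i, StronglyMeasurable[𝒢 (i + 1)] (X i)) (hint : ∀ i, Integrable (X i) P)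
    (hXp : ∀ i, Integrable (fun ω => ‖X i ω - μ‖ ^ p) P)
    (hmean : ∀ i, P[X i | 𝒢 i] =ᵐ[P] fun _ => μ)
    (hv : ∀ i, ∀ᵐ ω ∂P, P[fun ω => ‖X i ω - μ‖ ^ p | 𝒢 i] ω ≤ v)
    (hZ : StronglyMeasurable[𝒢 0] Z) (hr : 0 ≤ r) :
    P {ω | ∃ n : ℕ, n * (lam ^ (p - 1) * (β * frakC p (1 / β) + Kp p * 2 ^ (p - 1)) *
        (v + r ^ p)) + β * Real.log (2 / δ) / lam <
        ‖∑ i ∈ Finset.range n, (clip lam (X i ω - Z ω) + Z ω - μ)‖} ≤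
      ENNReal.ofReal δ + P {ω | r ≤ ‖μ - Z ω‖} := by
  set Z' : Ω → B := fun ω => if r ≤ ‖μ - Z ω‖ then μ else Z ω with hZ'
  have hZ'_meas : StronglyMeasurable[𝒢 0] Z' := by
    refine StronglyMeasurable.ite ?_ stronglyMeasurable_const hZ
    exact stronglyMeasurable_const.measurableSet_le (stronglyMeasurable_const.sub hZ).norm
  have hZ'r (ω : Ω) : ‖μ - Z' ω‖ ≤ r := by
    simp only [hZ']
    split_ifs with h
    · simpa using hr
    · exact (not_le.1 h).le
  refine (measure_mono ?_).trans ((measure_union_le _ _).trans (add_le_add_left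
    (hB.measure_exists_lt_norm_sum_clip_sub_le_of_norm_sub_le hβ hp1 hp2 hlam hδ hX hint hXp hmean
      hv hZ'_meas hZ'r) _))
  rintro ω ⟨n, hn⟩
  by_cases hω : r ≤ ‖μ - Z ω‖
  · exact Or.inr hω
  · exact Or.inl ⟨n, by simpa only [hZ', if_neg hω] using hn⟩

end ClippedSums

lemma norm_inv_card_smul_sum_sub_le {B ι : Type*} [NormedAddCommGroup B] [NormedSpace ℝ B]
    {s : Finset ι} (hs : s.Nonempty) {x : ι → B} {μ : B} {a b : ℝ}
    (h : ‖∑ i ∈ s, (x i - μ)‖ ≤ s.card * a + b) :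
    ‖(s.card : ℝ)⁻¹ • ∑ i ∈ s, x i - μ‖ ≤ a + b / s.card := by
  have hcard : (0 : ℝ) < s.card := Nat.cast_pos.2 hs.card_pos
  have hmean : (s.card : ℝ)⁻¹ • ∑ i ∈ s, x i - μ = (s.card : ℝ)⁻¹ • ∑ i ∈ s, (x i - μ) := by
    rw [Finset.sum_sub_distrib, Finset.sum_const, smul_sub, ← Nat.cast_smul_eq_nsmul ℝ,
      inv_smul_smul₀ hcard.ne']
  rw [hmean, norm_smul, norm_inv, Real.norm_of_nonneg hcard.le, inv_mul_le_iff₀ hcard, mul_add,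
    mul_div_cancel₀ _ hcard.ne']
  exact h

lemma ofReal_one_sub_sub_le_measure {Ω : Type*} {mΩ : MeasurableSpace Ω} {P : Measure Ω}
    [IsProbabilityMeasure P] {s t : Set Ω} {a b : ℝ} (hst : sᶜ ⊆ t) (ha : 0 ≤ a) (hb : 0 ≤ b)
    (ht : P t ≤ ENNReal.ofReal a + ENNReal.ofReal b) : ENNReal.ofReal (1 - a - b) ≤ P s := by
  rw [sub_sub, ENNReal.ofReal_sub _ (add_nonneg ha hb), ENNReal.ofReal_one,
    ENNReal.ofReal_add ha hb, tsub_le_iff_right]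
  calc 1 = P (s ∪ sᶜ) := by rw [Set.union_compl_self, measure_univ]
    _ ≤ P s + P sᶜ := measure_union_le s sᶜ
    _ ≤ P s + (ENNReal.ofReal a + ENNReal.ofReal b) := by gcongr; exact (measure_mono hst).trans ht

theorem stmt12_general {B : Type*} [NormedAddCommGroup B] [NormedSpace ℝ B] [CompleteSpace B]
    {Ω : Type*} {mΩ : MeasurableSpace Ω} {P : Measure Ω} [IsProbabilityMeasure P] {β : ℝ}
    (hβ : 1 ≤ β) (hB : IsTwoSmooth B β) {ℱ : Filtration ℕ mΩ} {X : ℕ → Ω → B} {μ : B} {p v : ℝ}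
    (hp1 : 1 ≤ p) (hp2 : p ≤ 2)
    (hadapted : ∀ n : ℕ, 1 ≤ n → StronglyMeasurable[ℱ n] (X n))
    (hint : ∀ n : ℕ, 1 ≤ n → Integrable (X n) P)
    (hmom : ∀ n : ℕ, 1 ≤ n → Integrable (fun ω => ‖X n ω‖ ^ p) P)
    (hcondmean : ∀ n : ℕ, P[X (n + 1) | ℱ n] =ᵐ[P] fun _ => μ)
    (hcondmom : ∀ n : ℕ, ∀ᵐ ω ∂P, P[fun ω' => ‖X (n + 1) ω' - μ‖ ^ p | ℱ n] ω ≤ v)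
    {k : ℕ} {Z : Ω → B} (hZ : StronglyMeasurable[ℱ k] Z) {δ₂ : ℝ} (hδ₂ : 0 ≤ δ₂) {r₂ : ℝ}
    (hr₂ : 0 ≤ r₂) (htail : P {ω | r₂ ≤ ‖μ - Z ω‖} ≤ ENNReal.ofReal δ₂) {lam : ℝ}
    (hlam : 0 < lam) {δ₁ : ℝ} (hδ₁ : 0 < δ₁) :
    ENNReal.ofReal (1 - δ₁ - δ₂) ≤
      P {ω | ∀ n : ℕ, k < n →
        ‖((n : ℝ) - k)⁻¹ • (∑ m ∈ Finset.Ioc k n,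
            (truncB (lam • (X m ω - Z ω)) • (X m ω - Z ω) + Z ω)) - μ‖ ≤
          lam ^ (p - 1) * (β * frakC p (1 / β) + Kp p * 2 ^ (p - 1)) * (v + r₂ ^ p)
            + β * Real.log (2 / δ₁) / (lam * ((n : ℝ) - k))} := by
  let 𝒢 : Filtration ℕ mΩ :=
    ⟨fun i => ℱ (k + i), fun _ _ hij => ℱ.mono (Nat.add_le_add_left hij k), fun i => ℱ.le (k + i)⟩
  have hXp (i : ℕ) : Integrable (fun ω => ‖X (k + i + 1) ω - μ‖ ^ p) P := by
    simpa only [sub_eq_add_neg] using integrable_norm_add_rpow hp1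
      (hint (k + i + 1) (by omega)).aestronglyMeasurable aestronglyMeasurable_const
      (hmom (k + i + 1) (by omega)) (integrable_const (‖-μ‖ ^ p))
  have hfail := hB.measure_exists_lt_norm_sum_clip_sub_le (𝒢 := 𝒢)
    (X := fun i => X (k + i + 1)) hβ hp1 hp2 hlam hδ₁ (fun i => hadapted (k + i + 1) (by omega))
    (fun i => hint (k + i + 1) (by omega)) hXp (fun i => hcondmean (k + i))
    (fun i => hcondmom (k + i)) hZ hr₂
  refine ofReal_one_sub_sub_le_measure ?_ hδ₁.le hδ₂ (hfail.trans (by gcongr))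
  refine Set.compl_subset_comm.1 fun ω hω n hkn => ?_
  have hcard : ((Finset.Ioc k n).card : ℝ) = n - k := by rw [Nat.card_Ioc, Nat.cast_sub hkn.le]
  rw [← hcard, ← div_div]
  refine norm_inv_card_smul_sum_sub_le (Finset.nonempty_Ioc.2 hkn) ?_
  rw [← Finset.Ico_add_one_add_one_eq_Ioc, Finset.sum_Ico_eq_sum_range, Nat.card_Ico]
  simpa only [clip, Nat.add_sub_add_right, add_right_comm] using
    not_lt.1 fun hn => hω ⟨n + 1 - (k + 1), hn⟩

/-- **Time-uniform line-crossing inequality (Theorem).** With an `F_k`-measurable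
centering `Ẑ` satisfying `P(‖μ - Ẑ‖ ≥ r₂) ≤ δ₂`, for any `λ > 0` and `δ₁ + δ₂ ≤ 1`, with
probability at least `1 - δ₁ - δ₂`, simultaneously for all `n > k`,
`‖μ̂ₙ(k) - μ‖ ≤ λ^{p-1}(β𝔠_p + K_p2^{p-1})(v + r₂^p) + β log(2/δ₁)/(λ(n-k))`. -/
theorem stmt12
    {B : Type*} [NormedAddCommGroup B] [NormedSpace ℝ B] [CompleteSpace B]
    [TopologicalSpace.SeparableSpace B]
    {Ω : Type*} {mΩ : MeasurableSpace Ω} {P : Measure Ω} [IsProbabilityMeasure P]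
    (β : ℝ) (hβ : 1 ≤ β)
    (hsmooth : ∀ x y : B, ‖x + y‖ ^ 2 + ‖x - y‖ ^ 2 ≤ 2 * ‖x‖ ^ 2 + 2 * β ^ 2 * ‖y‖ ^ 2)
    (ℱ : Filtration ℕ mΩ) (X : ℕ → Ω → B) (μ : B) (p v : ℝ)
    (hp1 : 1 < p) (hp2 : p ≤ 2) (hv : 0 < v)
    (hadapted : ∀ n : ℕ, 1 ≤ n → StronglyMeasurable[ℱ n] (X n))
    (hint : ∀ n : ℕ, 1 ≤ n → Integrable (X n) P)
    (hmom : ∀ n : ℕ, 1 ≤ n → Integrable (fun ω => ‖X n ω‖ ^ p) P)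
    (hcondmean : ∀ n : ℕ, P[X (n + 1) | ℱ n] =ᵐ[P] fun _ => μ)
    (hcondmom : ∀ n : ℕ, ∀ᵐ ω ∂P, (P[fun ω' => ‖X (n + 1) ω' - μ‖ ^ p | ℱ n]) ω ≤ v)
    (k : ℕ) (Z : Ω → B) (hZ : StronglyMeasurable[ℱ k] Z)
    (δ₂ : ℝ) (hδ₂ : δ₂ ∈ Set.Ioo (0 : ℝ) 1) (r₂ : ℝ) (hr₂ : 0 ≤ r₂)
    (htail : P {ω | r₂ ≤ ‖μ - Z ω‖} ≤ ENNReal.ofReal δ₂)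
    (lam : ℝ) (hlam : 0 < lam)
    (δ₁ : ℝ) (hδ₁ : δ₁ ∈ Set.Ioo (0 : ℝ) 1) (hδ : δ₁ + δ₂ ≤ 1) :
    ENNReal.ofReal (1 - δ₁ - δ₂) ≤
      P {ω | ∀ n : ℕ, k < n →
        ‖((n : ℝ) - k)⁻¹ • (∑ m ∈ Finset.Ioc k n,
            (truncB (lam • (X m ω - Z ω)) • (X m ω - Z ω) + Z ω)) - μ‖ ≤
          lam ^ (p - 1) * (β * frakC p (1 / β) + Kp p * 2 ^ (p - 1)) * (v + r₂ ^ p)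
            + β * Real.log (2 / δ₁) / (lam * ((n : ℝ) - k))} :=
  stmt12_general hβ hsmooth hp1.le hp2 hadapted hint hmom hcondmean hcondmom hZ hδ₂.1.le hr₂ htail
    hlam hδ₁.1
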